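/- Let M ⊆ ℝⁿ be closed, B : ℝⁿ → ℝᵐ continuous with components B₁,…,B_m, and K := {x ∈ M : B_i(x) ≤ 0 for all i}. Let x ∈ ∂K ∩ int(M), set I_x := {i : B_i(x) = 0}, and assume each B_i with i ∈ I_x is continuously differentiable on a neighborhood of x and there exists v ∈ ℝⁿ with ⟨∇B_i(x), v⟩ < 0 for all i ∈ I_x. Then T_K(x) = {w ∈ ℝⁿ : ⟨∇B_i(x), w⟩ ≤ 0 for all i ∈ I_x}. -/

import Mathlib

open Filter Set
open scoped RealInnerProductSpace

/-- The contingent cone of `K` at `x` (sequence characterization). -/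
def contingentCone {n : ℕ} (K : Set (EuclideanSpace ℝ (Fin n)))
    (x : EuclideanSpace ℝ (Fin n)) : Set (EuclideanSpace ℝ (Fin n)) :=
  {v | ∃ (h : ℕ → ℝ) (w : ℕ → EuclideanSpace ℝ (Fin n)),
      (∀ i, 0 < h i) ∧ Filter.Tendsto h Filter.atTop (nhds 0) ∧
        Filter.Tendsto w Filter.atTop (nhds v) ∧ ∀ i, x + h i • w i ∈ K}

/-!
Let `g i ≤ 0` be the constraints cutting out `K`, with derivatives `g' i` at `x`. The contingent
cone is Mathlib's `posTangentConeAt`, on which `g' i ≤ 0` for every active `i` because `x` maximizes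
`g i` on `K`. Conversely, a direction `w` with `g' i w < 0` for all active `i` points into `K`, so
it is tangent. By transversality the directions `w + ε • v`, `ε > 0`, are of this kind whenever
`g' i w ≤ 0` for all active `i`, and the tangent cone is closed.
-/

open scoped Topology

section ContingentCone

lemma exists_pos_tendsto_atTop_smul_tendsto_zero {E : Type*} [SeminormedAddCommGroup E]
    [NormedSpace ℝ E] {d : ℕ → E} (hd : Tendsto d atTop (𝓝 0)) :
    ∃ e : ℕ → ℝ, (∀ k, 0 < e k) ∧ Tendsto e atTop atTop ∧
      Tendsto (fun k ↦ e k • d k) atTop (𝓝 0) := by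
  -- The second summand keeps `η` positive where `d` vanishes.
  let η : ℕ → ℝ := fun k ↦ √‖d k‖ + 1 / ((k : ℝ) + 1)
  have hη_pos (k : ℕ) : 0 < η k := add_pos_of_nonneg_of_pos (by positivity) (by positivity)
  have hsqrt : Tendsto (fun k ↦ √‖d k‖) atTop (𝓝 0) := by simpa using hd.norm.sqrt
  have hη : Tendsto η atTop (𝓝 0) := by
    simpa only [add_zero] using hsqrt.add (tendsto_one_div_add_atTop_nhds_zero_nat (𝕜 := ℝ))
  refine ⟨fun k ↦ (η k)⁻¹, fun k ↦ inv_pos.2 (hη_pos k),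
    (tendsto_nhdsWithin_iff.2 ⟨hη, .of_forall hη_pos⟩).inv_tendsto_nhdsGT_zero,
    squeeze_zero_norm (fun k ↦ ?_) hsqrt⟩
  calc ‖(η k)⁻¹ • d k‖ = ‖d k‖ / η k := by
        rw [norm_smul, norm_inv, Real.norm_of_nonneg (hη_pos k).le, inv_mul_eq_div]
    _ ≤ √‖d k‖ := by
        rw [div_le_iff₀ (hη_pos k)]
        calc ‖d k‖ = √‖d k‖ * √‖d k‖ := (Real.mul_self_sqrt (norm_nonneg _)).symm
          _ ≤ √‖d k‖ * η k := by gcongr; exact le_add_of_nonneg_right (by positivity)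

variable {n : ℕ} (K : Set (EuclideanSpace ℝ (Fin n))) (x : EuclideanSpace ℝ (Fin n))

lemma contingentCone_subset_posTangentConeAt : contingentCone K x ⊆ posTangentConeAt K x := by
  rintro v ⟨h, w, hpos, hh, hw, hmem⟩
  refine mem_tangentConeAt_of_seq atTop (fun k ↦ (h k).toNNReal⁻¹) (fun k ↦ h k • w k)
    (by simpa using hh.smul hw) (.of_forall hmem) (hw.congr fun k ↦ ?_)
  rw [NNReal.smul_def, NNReal.coe_inv, Real.coe_toNNReal _ (hpos k).le,
    inv_smul_smul₀ (hpos k).ne']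

lemma posTangentConeAt_subset_contingentCone : posTangentConeAt K x ⊆ contingentCone K x := by
  intro v hv
  obtain ⟨c, d, hd, hmem, hcd⟩ := mem_tangentConeAt_iff_exists_seq.1 hv
  -- The multipliers `c` may stay bounded or vanish when `v = 0`, so `c⁻¹` need not be a valid step;
  -- adding `e → ∞` with `e • d → 0` makes `(c + e)⁻¹` one without changing the limit direction.
  obtain ⟨e, he_pos, he, hed⟩ := exists_pos_tendsto_atTop_smul_tendsto_zero hd
  obtain ⟨N, hN⟩ := eventually_atTop.1 hmem
  have hpos (k : ℕ) : 0 < (c k : ℝ) + e k := add_pos_of_nonneg_of_pos (c k).2 (he_pos k)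
  have hstep : Tendsto (fun k ↦ ((c k : ℝ) + e k)⁻¹) atTop (𝓝 0) :=
    (tendsto_atTop_mono (fun k ↦ le_add_of_nonneg_left (c k).2) he).inv_tendsto_atTop
  have hdir : Tendsto (fun k ↦ ((c k : ℝ) + e k) • d k) atTop (𝓝 v) := by
    simpa only [add_smul, add_zero, NNReal.smul_def] using hcd.add hed
  refine ⟨_, _, fun k ↦ inv_pos.2 (hpos (k + N)), (tendsto_add_atTop_iff_nat N).2 hstep,
    (tendsto_add_atTop_iff_nat N).2 hdir, fun k ↦ ?_⟩
  rw [inv_smul_smul₀ (hpos _).ne']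
  exact hN _ (Nat.le_add_left N k)

lemma contingentCone_eq_posTangentConeAt : contingentCone K x = posTangentConeAt K x :=
  (contingentCone_subset_posTangentConeAt K x).antisymm (posTangentConeAt_subset_contingentCone K x)

end ContingentCone

lemma isClosed_tangentConeAt (R : Type*) {E : Type*} [AddCommGroup E] [SMul R E]
    [TopologicalSpace E] (s : Set E) (x : E) : IsClosed (tangentConeAt R s x) := by
  rw [tangentConeAt_def]
  exact isClosed_setOfPred_clusterPt

section FeasibleDirections

variable {ι E : Type*} [AddCommGroup E] [Module ℝ E]

lemma eventually_add_smul_lt_of_hasLineDerivAt_neg {f : E → ℝ} {f' : ℝ} {x w : E}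
    (hf : HasLineDerivAt ℝ f f' x w) (hf' : f' < 0) :
    ∀ᶠ t : ℝ in 𝓝[>] 0, f (x + t • w) < f x := by
  filter_upwards [hf.tendsto_slope_zero_right.eventually_lt_const hf', self_mem_nhdsWithin]
    with t hslope ht
  exact sub_neg.1 ((smul_neg_iff_of_pos_left (inv_pos.2 ht)).1 hslope)

variable [TopologicalSpace E] [ContinuousAdd E] [ContinuousSMul ℝ E]

lemma tendsto_add_smul_nhdsGT_zero (x w : E) :
    Tendsto (fun t : ℝ ↦ x + t • w) (𝓝[>] 0) (𝓝 x) :=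
  (Continuous.tendsto' (by fun_prop) 0 x (by simp)).mono_left nhdsWithin_le_nhds

lemma setOfPred_forall_nonpos_subset_closure {F : Type*} [FunLike F E ℝ] [LinearMapClass F ℝ E ℝ]
    {f : ι → F} {I : Set ι} {v : E} (hv : ∀ i ∈ I, f i v < 0) :
    {w | ∀ i ∈ I, f i w ≤ 0} ⊆ closure {w | ∀ i ∈ I, f i w < 0} := by
  intro w hw
  refine mem_closure_of_tendsto (tendsto_add_smul_nhdsGT_zero w v) ?_
  filter_upwards [self_mem_nhdsWithin] with ε hε i hi
  rw [map_add, map_smul, smul_eq_mul]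
  exact add_neg_of_nonpos_of_neg (hw i hi) (mul_neg_of_pos_of_neg hε (hv i hi))

lemma eventually_forall_add_smul_nonpos [Finite ι] {g : ι → E → ℝ} {g' : ι → ℝ} {x w : E}
    (hx : ∀ i, g i x ≤ 0) (hinactive : ∀ i, g i x < 0 → UpperSemicontinuousAt (g i) x)
    (hactive : ∀ i, g i x = 0 → HasLineDerivAt ℝ (g i) (g' i) x w)
    (hg' : ∀ i, g i x = 0 → g' i < 0) :
    ∀ᶠ t : ℝ in 𝓝[>] 0, ∀ i, g i (x + t • w) ≤ 0 := by
  rw [eventually_all]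
  intro i
  rcases (hx i).lt_or_eq with hi | hi
  · have hlt : ∀ᶠ y in 𝓝 x, g i y < 0 := hinactive i hi 0 hi
    exact ((tendsto_add_smul_nhdsGT_zero x w).eventually hlt).mono fun _ ↦ le_of_lt
  · filter_upwards [eventually_add_smul_lt_of_hasLineDerivAt_neg (hactive i hi) (hg' i hi)]
      with t ht
    exact (ht.trans_eq hi).le

end FeasibleDirections

theorem stmt_6_general {ι E : Type*} [Finite ι] [NormedAddCommGroup E] [NormedSpace ℝ E]
    {M : Set E} {x : E} (hM : M ∈ 𝓝 x) {g : ι → E → ℝ} {g' : ι → StrongDual ℝ E}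
    (hx : ∀ i, g i x ≤ 0)
    (hinactive : ∀ i, g i x < 0 → UpperSemicontinuousAt (g i) x)
    (hactive : ∀ i, g i x = 0 → HasFDerivAt (g i) (g' i) x)
    (htrans : ∃ v, ∀ i, g i x = 0 → g' i v < 0) :
    posTangentConeAt {y ∈ M | ∀ i, g i y ≤ 0} x = {w | ∀ i, g i x = 0 → g' i w ≤ 0} := by
  apply Subset.antisymm
  · intro w hw i hi
    have hmax : IsLocalMaxOn (g i) {y ∈ M | ∀ i, g i y ≤ 0} x :=
      eventually_nhdsWithin_of_forall fun y hy ↦ (hy.2 i).trans_eq hi.symm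
    exact hmax.hasFDerivWithinAt_nonpos (hactive i hi).hasFDerivWithinAt hw
  · obtain ⟨v, hv⟩ := htrans
    have hstrict : {w | ∀ i, g i x = 0 → g' i w < 0} ⊆
        posTangentConeAt {y ∈ M | ∀ i, g i y ≤ 0} x := fun w hw ↦
      mem_posTangentConeAt_of_frequently_mem <| Eventually.frequently <|
        ((tendsto_add_smul_nhdsGT_zero x w).eventually hM).and <|
          eventually_forall_add_smul_nonpos hx hinactive
            (fun i hi ↦ (hactive i hi).hasLineDerivAt w) hw
    exact (setOfPred_forall_nonpos_subset_closure (I := {i | g i x = 0}) hv).trans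
      (closure_minimal hstrict (isClosed_tangentConeAt ..))

theorem stmt_6 {n m : ℕ} (M : Set (EuclideanSpace ℝ (Fin n))) (hM : IsClosed M)
    (B : Fin m → EuclideanSpace ℝ (Fin n) → ℝ) (hBcont : ∀ i, Continuous (B i))
    (K : Set (EuclideanSpace ℝ (Fin n))) (hK : K = {y ∈ M | ∀ i, B i y ≤ 0})
    (x : EuclideanSpace ℝ (Fin n)) (hx : x ∈ frontier K ∩ interior M)
    (I : Set (Fin m)) (hI : I = {i | B i x = 0})
    (U : Set (EuclideanSpace ℝ (Fin n))) (hU : IsOpen U) (hxU : x ∈ U)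
    (hB : ∀ i ∈ I, ContDiffOn ℝ 1 (B i) U)
    (htrans : ∃ v, ∀ i ∈ I, ⟪gradient (B i) x, v⟫ < 0) :
    contingentCone K x = {w | ∀ i ∈ I, ⟪gradient (B i) x, w⟫ ≤ 0} := by
  subst hK hI
  have hKclosed : IsClosed {y ∈ M | ∀ i, B i y ≤ 0} :=
    hM.inter (isClosed_le (continuous_pi hBcont) continuous_const)
  have hactive (i : Fin m) (hi : B i x = 0) : HasFDerivAt (B i) (fderiv ℝ (B i) x) x :=
    ((hB i hi).contDiffAt (hU.mem_nhds hxU)).differentiableAt one_ne_zero |>.hasFDerivAt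
  simp only [inner_gradient_left] at htrans ⊢
  rw [contingentCone_eq_posTangentConeAt]
  exact stmt_6_general (mem_interior_iff_mem_nhds.1 hx.2) (hKclosed.frontier_subset hx.1).2
    (fun i _ ↦ (hBcont i).continuousAt.upperSemicontinuousAt) hactive htrans
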